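/- arXiv:2511.10509 — 8 statements merged into one kernel-verified Lean document; each statement's English description precedes it below -/
import Mathlib

section
/- There exist universal constants c > 0 and γ > 0 such that for every integer n ≥ 2 there are points p₁, …, pₙ in the unit square [0,1]² and lines ℓ₁, …, ℓₙ in ℝ² such that pᵢ ∈ ℓᵢ for every i, and for all i ≠ j the Euclidean distance from pᵢ to the line ℓⱼ is at least c · n^(γ−1). -/
lemma line_dist (x0 y0 x1 y1 M e : ℝ) (hM : |M| ≤ 5)
    (h : 6 * e ≤ |y1 - y0 - M * (x1 - x0)|) :
    e ≤ Metric.infDist (!₂[x1, y1] : EuclideanSpace ℝ (Fin 2))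
      (AffineSubspace.mk' (!₂[x0, y0] : EuclideanSpace ℝ (Fin 2))
        (Submodule.span ℝ {(!₂[1, M] : EuclideanSpace ℝ (Fin 2))}) :
          Set (EuclideanSpace ℝ (Fin 2))) := by
  rw [Metric.le_infDist ⟨_, AffineSubspace.self_mem_mk' _ _⟩]
  intro q hq
  rw [SetLike.mem_coe, AffineSubspace.mem_mk', Submodule.mem_span_singleton] at hq
  obtain ⟨t, ht⟩ := hq
  have h0 := congrArg (fun v : EuclideanSpace ℝ (Fin 2) => v 0) ht
  have h1 := congrArg (fun v : EuclideanSpace ℝ (Fin 2) => v 1) ht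
  simp at h0 h1
  have k (i : Fin 2) : |(!₂[x1, y1] : EuclideanSpace ℝ (Fin 2)) i - q i| ≤ dist !₂[x1, y1] q := by
    rw [dist_eq_norm]
    have := PiLp.norm_apply_le (!₂[x1, y1] - q) i
    simpa using this
  have k0 := k 0
  have k1 := k 1
  simp at k0 k1
  set D := dist (!₂[x1, y1] : EuclideanSpace ℝ (Fin 2)) q
  have e1 : y1 - y0 - M * (x1 - x0) = (y1 - q 1) - M * (x1 - q 0) := by
    rw [h0] at h1
    linarith
  have e2 : |y1 - y0 - M * (x1 - x0)| ≤ |y1 - q 1| + |M| * |x1 - q 0| := by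
    rw [e1, ← abs_mul]; exact abs_sub _ _
  have e3 : |M| * |x1 - q 0| ≤ 5 * D :=
    mul_le_mul hM k0 (abs_nonneg _) (by norm_num)
  linarith

lemma exists_d (p : ℕ) (hp : p.Prime) (h2 : 2 < p) : ∃ d : ℕ, d < p ∧
    ∀ s t : ℤ, (p : ℤ) ∣ s ^ 2 - d * t ^ 2 → (p : ℤ) ∣ s ∧ (p : ℤ) ∣ t := by
  have : Fact p.Prime := ⟨hp⟩
  obtain ⟨a, ha⟩ := FiniteField.exists_nonsquare (F := ZMod p)
    (by rw [ZMod.ringChar_zmod_n]; omega)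
  refine ⟨a.val, ZMod.val_lt a, fun s t h => ?_⟩
  rw [← ZMod.intCast_zmod_eq_zero_iff_dvd] at h
  simp only [← ZMod.intCast_zmod_eq_zero_iff_dvd]
  push_cast at h
  rw [ZMod.natCast_zmod_val] at h
  have ht : (t : ZMod p) = 0 := by
    by_contra ht
    apply ha
    refine ⟨(s : ZMod p) / t, ?_⟩
    field_simp
    linear_combination -h
  refine ⟨?_, ht⟩
  rw [ht] at h
  simpa using h

lemma nonsq (p d : ℕ) (hp : p.Prime)
    (H : ∀ s t : ℤ, (p : ℤ) ∣ s ^ 2 - d * t ^ 2 → (p : ℤ) ∣ s ∧ (p : ℤ) ∣ t)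
    (P Q : ℤ) (h : P ^ 2 - d * Q ^ 2 = 0) : P = 0 ∧ Q = 0 := by
  by_cases hQ : Q = 0
  · subst hQ; simpa using h
  · exfalso
    have : Q ^ 2 ∣ P ^ 2 := ⟨d, by linarith⟩
    rw [Int.pow_dvd_pow_iff (by norm_num)] at this
    obtain ⟨k, rfl⟩ := this
    have hk : k ^ 2 - d * 1 ^ 2 = 0 := by
      have : Q ^ 2 * (k ^ 2 - d * 1 ^ 2) = 0 := by linarith
      rcases mul_eq_zero.mp this with h | h
      · exact absurd (pow_eq_zero_iff (by norm_num) |>.mp h) hQ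
      · exact h
    have := (H k 1 (by rw [hk]; exact dvd_zero _)).2
    have h3 := hp.two_le
    have := Int.le_of_dvd one_pos this
    omega

lemma small_dvd {p s u v : ℤ} (hs : s ≤ p) (hu : 0 ≤ u) (hu' : u < s) (hv : 0 ≤ v) (hv' : v < s)
    (h : p ∣ u - v) : u = v := by
  have := Int.eq_zero_of_abs_lt_dvd h (by rw [abs_lt]; constructor <;> linarith)
  linarith

lemma alpha_bound (P Q : ℤ) (d : ℕ) (w B : ℝ) (hw : 0 ≤ w) (hwd : w ^ 2 = d)
    (h : P ^ 2 - d * Q ^ 2 ≠ 0) (hB : |(P : ℝ)| + |(Q : ℝ)| * w ≤ B) (hB0 : 0 < B) :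
    1 / B ≤ |P + Q * w| := by
  rw [div_le_iff₀ hB0]
  have h1 : (1 : ℝ) ≤ |((P ^ 2 - d * Q ^ 2 : ℤ) : ℝ)| := by
    exact_mod_cast Int.one_le_abs h
  have h2 : ((P ^ 2 - d * Q ^ 2 : ℤ) : ℝ) = (P + Q * w) * (P - Q * w) := by
    push_cast; rw [← hwd]; ring
  rw [h2, abs_mul] at h1
  have h3 : |(P : ℝ) - Q * w| ≤ B := by
    refine (abs_sub _ _).trans ?_
    rw [abs_mul, abs_of_nonneg hw]; exact hB
  exact h1.trans (mul_le_mul_of_nonneg_left h3 (abs_nonneg _))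

/-- Algebraic separation for two index tuples. -/
lemma sep (r p d : ℕ) (hr : 2 ≤ r) (hp : p.Prime) (hp1 : r ^ 2 < p) (hp2 : p ≤ 2 * r ^ 2)
    (hd : d < p)
    (H : ∀ s t : ℤ, (p : ℤ) ∣ s ^ 2 - d * t ^ 2 → (p : ℤ) ∣ s ∧ (p : ℤ) ∣ t)
    (u0 v0 a0 b0 u1 v1 a1 b1 : ℤ)
    (hu0 : 0 ≤ u0 ∧ u0 < r ^ 2) (hv0 : 0 ≤ v0 ∧ v0 < r ^ 2)
    (hu1 : 0 ≤ u1 ∧ u1 < r ^ 2) (hv1 : 0 ≤ v1 ∧ v1 < r ^ 2)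
    (ha0 : 0 ≤ a0 ∧ a0 ≤ 2 * r ^ 6) (ha1 : 0 ≤ a1 ∧ a1 ≤ 2 * r ^ 6)
    (hb0 : 0 ≤ b0 ∧ b0 < r ^ 5) (hb1 : 0 ≤ b1 ∧ b1 < r ^ 5)
    (hm0 : (p : ℤ) ∣ a0 - (u0 ^ 2 - d * v0 ^ 2))
    (hm1 : (p : ℤ) ∣ a1 - (u1 ^ 2 - d * v1 ^ 2))
    (hne : ¬ (u0 = u1 ∧ v0 = v1 ∧ a0 = a1 ∧ b0 = b1))
    (w : ℝ) (hw : 0 ≤ w) (hwd : w ^ 2 = d) (hwr : w ≤ 2 * r) :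
    1 / (18 * (r : ℝ) ^ 6) ≤
      |((a1 + b1 * w) - (a0 + b0 * w) - 2 * (u0 - v0 * w) * ((u1 + v1 * w) - (u0 + v0 * w)) : ℝ)| := by
  have hr1 : (2 : ℝ) ≤ r := by exact_mod_cast hr
  set P : ℤ := a1 - a0 - 2 * (u0 * (u1 - u0) - d * (v0 * (v1 - v0))) with hP
  set Q : ℤ := b1 - b0 - 2 * (u0 * (v1 - v0) - v0 * (u1 - u0)) with hQ
  have e : ((a1 + b1 * w) - (a0 + b0 * w) - 2 * (u0 - v0 * w) * ((u1 + v1 * w) - (u0 + v0 * w)) : ℝ)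
      = P + Q * w := by
    rw [hP, hQ]; push_cast; linear_combination (2 * v0 * (v1 - v0) : ℝ) * hwd
  rw [e]
  have bd : ∀ x y z : ℤ, 0 ≤ x ∧ x < r ^ 2 → 0 ≤ y ∧ y < r ^ 2 → 0 ≤ z ∧ z < r ^ 2 →
      |x * (y - z)| ≤ r ^ 4 := by
    intro x y z hx hy hz
    rw [abs_mul]
    calc |x| * |y - z| ≤ r ^ 2 * r ^ 2 := by
          apply mul_le_mul
          · rw [abs_le]; constructor <;> linarith [hx.1, hx.2]
          · rw [abs_le]; constructor <;> linarith [hy.1, hy.2, hz.1, hz.2]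
          · exact abs_nonneg _
          · positivity
      _ = _ := by ring
  have hrz : (2 : ℤ) ≤ r := by exact_mod_cast hr
  have r46 : (r : ℤ) ^ 4 ≤ r ^ 6 := pow_le_pow_right₀ (by linarith) (by norm_num)
  have r45 : (r : ℤ) ^ 4 ≤ r ^ 5 := pow_le_pow_right₀ (by linarith) (by norm_num)
  have hd2 : (d : ℤ) ≤ 2 * r ^ 2 := by exact_mod_cast (hd.le.trans hp2)
  have hdv : |(d : ℤ) * (v0 * (v1 - v0))| ≤ 2 * r ^ 6 := by
    rw [abs_mul, abs_of_nonneg (by positivity : (0 : ℤ) ≤ d)]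
    calc (d : ℤ) * |v0 * (v1 - v0)| ≤ (2 * r ^ 2) * r ^ 4 :=
          mul_le_mul hd2 (bd _ _ _ hv0 hv1 hv0) (abs_nonneg _) (by positivity)
      _ = _ := by ring
  have hP8 : |P| ≤ 8 * r ^ 6 := by
    have h1 := abs_le.mp (bd _ _ _ hu0 hu1 hu0)
    have h2 := abs_le.mp hdv
    rw [abs_le, hP]
    constructor <;> linarith [h1.1, h1.2, h2.1, h2.2, ha0.1, ha0.2, ha1.1, ha1.2]
  have hQ5 : |Q| ≤ 5 * r ^ 5 := by
    have h1 := abs_le.mp (bd _ _ _ hu0 hv1 hv0)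
    have h2 := abs_le.mp (bd _ _ _ hv0 hu1 hu0)
    rw [abs_le, hQ]
    constructor <;> linarith [h1.1, h1.2, h2.1, h2.2, hb0.1, hb0.2, hb1.1, hb1.2]
  apply alpha_bound P Q d w _ hw hwd
  · intro h
    obtain ⟨hP0, hQ0⟩ := nonsq p d hp H P Q h
    have hdv : (p : ℤ) ∣ (u1 - u0) ^ 2 - d * (v1 - v0) ^ 2 := by
      have h3 := dvd_sub hm0 hm1
      have h4 : a0 - (u0 ^ 2 - d * v0 ^ 2) - (a1 - (u1 ^ 2 - d * v1 ^ 2)) =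
         (u1 - u0) ^ 2 - d * (v1 - v0) ^ 2 := by
        rw [hP] at hP0
        linear_combination -hP0
      rwa [h4] at h3
    obtain ⟨k1, k2⟩ := H _ _ hdv
    have hpz : (r : ℤ) ^ 2 ≤ p := by exact_mod_cast hp1.le
    have q1 := small_dvd hpz hu1.1 hu1.2 hu0.1 hu0.2 k1
    have q2 := small_dvd hpz hv1.1 hv1.2 hv0.1 hv0.2 k2
    apply hne
    subst q1 q2
    refine ⟨rfl, rfl, ?_, ?_⟩
    · rw [hP] at hP0; linarith
    · rw [hQ] at hQ0; linarith
  · have hP' : |(P : ℝ)| ≤ 8 * (r : ℝ) ^ 6 := by exact_mod_cast hP8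
    have hQ' : |(Q : ℝ)| ≤ 5 * (r : ℝ) ^ 5 := by exact_mod_cast hQ5
    have : |(Q : ℝ)| * w ≤ (5 * (r : ℝ) ^ 5) * (2 * r) :=
      mul_le_mul hQ' hwr hw (by positivity)
    nlinarith
  · positivity

lemma r_exists (n : ℕ) (hn : 2 ≤ n) : ∃ r : ℕ, 2 ≤ r ∧ n ≤ r ^ 13 ∧
    (n : ℝ) ^ ((1 : ℝ) / 13 - 1) ≤ 4096 / (r : ℝ) ^ 12 := by
  have hn1 : (1 : ℝ) < n := by exact_mod_cast hn
  have hn0 : (0 : ℝ) < n := by linarith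
  set z : ℝ := (n : ℝ) ^ ((1 : ℝ) / 13) with hz
  have hz1 : 1 < z := Real.one_lt_rpow hn1 (by norm_num)
  have hz13 : z ^ 13 = n := by
    rw [hz, ← Real.rpow_natCast, ← Real.rpow_mul hn0.le]; norm_num
  have hc := Nat.le_ceil z
  have hc' := Nat.ceil_lt_add_one (by linarith : 0 ≤ z)
  have h2 : 2 ≤ ⌈z⌉₊ := Nat.lt_ceil.mpr (by simpa using hz1)
  refine ⟨⌈z⌉₊, h2, ?_, ?_⟩
  · have : z ^ 13 ≤ (⌈z⌉₊ : ℝ) ^ 13 := pow_le_pow_left₀ (by linarith) hc 13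
    rw [hz13] at this
    exact_mod_cast this
  · rw [Real.rpow_sub_one hn0.ne', ← hz, ← hz13]
    have h3 : (⌈z⌉₊ : ℝ) ^ 12 ≤ (2 * z) ^ 12 := pow_le_pow_left₀ (by positivity) (by linarith) 12
    have h4 : (0 : ℝ) < (⌈z⌉₊ : ℝ) ^ 12 := by positivity
    rw [div_le_div_iff₀ (by positivity) h4]
    calc z * (⌈z⌉₊ : ℝ) ^ 12 ≤ z * (2 * z) ^ 12 := by gcongr
      _ = 4096 * z ^ 13 := by ring


/-- There exist universal constants `c > 0` and `γ > 0` such that for every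
integer `n ≥ 2` there are points `p₁, …, pₙ` in the unit square `[0,1]²` and lines
`ℓ₁, …, ℓₙ` in `ℝ²` (one-dimensional affine subspaces) such that `pᵢ ∈ ℓᵢ` for every `i`,
and for all `i ≠ j` the Euclidean distance from `pᵢ` to the line `ℓⱼ` is at least
`c · n^(γ−1)`. -/
theorem stmt0 :
    ∃ c γ : ℝ, 0 < c ∧ 0 < γ ∧
      ∀ n : ℕ, 2 ≤ n →
        ∃ (p : Fin n → EuclideanSpace ℝ (Fin 2))
          (ℓ : Fin n → AffineSubspace ℝ (EuclideanSpace ℝ (Fin 2))),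
          (∀ i, Module.finrank ℝ (ℓ i).direction = 1) ∧
          (∀ i, ∀ t, p i t ∈ Set.Icc (0 : ℝ) 1) ∧
          (∀ i, p i ∈ ℓ i) ∧
          (∀ i j, i ≠ j →
            c * (n : ℝ) ^ (γ - 1) ≤ Metric.infDist (p i) (ℓ j : Set (EuclideanSpace ℝ (Fin 2)))) := by
  refine ⟨1 / (72 * 6 * 4096), 1 / 13, by norm_num, by norm_num, fun n hn => ?_⟩
  obtain ⟨r, hr, hnr, hnr'⟩ := r_exists n hn
  obtain ⟨p, hp, hp1, hp2⟩ := Nat.exists_prime_lt_and_le_two_mul (r ^ 2) (by positivity)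
  have hr4 : 4 ≤ r ^ 2 := by nlinarith
  obtain ⟨d, hd, H⟩ := exists_d p hp (by omega)
  obtain ⟨f⟩ : Nonempty (Fin n ↪ Fin (r ^ 2) × Fin (r ^ 2) × Fin (r ^ 4) × Fin (r ^ 5)) := by
    apply Function.Embedding.nonempty_of_card_le
    simp only [Fintype.card_prod, Fintype.card_fin]
    calc n ≤ r ^ 13 := hnr
      _ = _ := by ring
  have hp0 : (0 : ℤ) < p := by exact_mod_cast hp.pos
  have hrR : (2 : ℝ) ≤ r := by exact_mod_cast hr
  have hr0 : (0 : ℝ) < r := by linarith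
  set w : ℝ := Real.sqrt d with hw
  have hw0 : 0 ≤ w := Real.sqrt_nonneg _
  have hwd : w ^ 2 = d := Real.sq_sqrt (by positivity)
  have hwr : w ≤ 2 * r := by
    have : (d : ℝ) ≤ 2 * r ^ 2 := by exact_mod_cast hd.le.trans hp2
    apply le_of_sq_le_sq _ (by positivity)
    nlinarith
  let u : Fin n → ℤ := fun i => ((f i).1 : ℕ)
  let v : Fin n → ℤ := fun i => ((f i).2.1 : ℕ)
  let A : Fin n → ℤ := fun i => ((f i).2.2.1 : ℕ)
  let b : Fin n → ℤ := fun i => ((f i).2.2.2 : ℕ)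
  let a : Fin n → ℤ := fun i => A i * p + (u i ^ 2 - d * v i ^ 2) % p
  have hu : ∀ i, 0 ≤ u i ∧ u i < r ^ 2 := fun i =>
    ⟨by positivity, by simp only [u, v, A, b]; exact_mod_cast (f i).1.isLt⟩
  have hv : ∀ i, 0 ≤ v i ∧ v i < r ^ 2 := fun i =>
    ⟨by positivity, by simp only [u, v, A, b]; exact_mod_cast (f i).2.1.isLt⟩
  have hA : ∀ i, 0 ≤ A i ∧ A i < r ^ 4 := fun i =>
    ⟨by positivity, by simp only [u, v, A, b]; exact_mod_cast (f i).2.2.1.isLt⟩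
  have hb : ∀ i, 0 ≤ b i ∧ b i < r ^ 5 := fun i =>
    ⟨by positivity, by simp only [u, v, A, b]; exact_mod_cast (f i).2.2.2.isLt⟩
  have ha : ∀ i, 0 ≤ a i ∧ a i ≤ 2 * r ^ 6 := by
    intro i
    have h1 := Int.emod_nonneg (u i ^ 2 - d * v i ^ 2) hp0.ne'
    have h2 := Int.emod_lt_of_pos (u i ^ 2 - d * v i ^ 2) hp0
    have h3 : (p : ℤ) ≤ 2 * r ^ 2 := by exact_mod_cast hp2
    have h4 : (A i + 1) * p ≤ r ^ 4 * (2 * r ^ 2) :=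
      mul_le_mul (by linarith [(hA i).2]) h3 hp0.le (by positivity)
    have h5 : 0 ≤ A i * p := mul_nonneg (hA i).1 hp0.le
    constructor
    · change 0 ≤ A i * p + _
      linarith
    · change A i * p + _ ≤ _
      nlinarith
  have hm : ∀ i, (p : ℤ) ∣ a i - (u i ^ 2 - d * v i ^ 2) := by
    intro i
    refine ⟨A i - (u i ^ 2 - d * v i ^ 2) / p, ?_⟩
    change A i * p + _ - _ = _
    have := Int.emod_add_mul_ediv (u i ^ 2 - d * v i ^ 2) p
    linear_combination this
  have hinj : ∀ i j, i ≠ j → ¬ (u i = u j ∧ v i = v j ∧ a i = a j ∧ b i = b j) := by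
    rintro i j hij ⟨h1, h2, h3, h4⟩
    apply hij
    apply f.injective
    have h5 : A i = A j := by
      change A i * p + (u i ^ 2 - d * v i ^ 2) % p = A j * p + (u j ^ 2 - d * v j ^ 2) % p at h3
      rw [h1, h2] at h3
      exact mul_right_cancel₀ hp0.ne' (add_right_cancel h3)
    refine Prod.ext (Fin.ext ?_) (Prod.ext (Fin.ext ?_) (Prod.ext (Fin.ext ?_) (Fin.ext ?_)))
    · exact Int.ofNat.inj h1
    · exact Int.ofNat.inj h2
    · exact Int.ofNat.inj h5
    · exact Int.ofNat.inj h4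
  let x : Fin n → ℝ := fun i => u i + v i * w
  let y : Fin n → ℝ := fun i => a i + b i * w
  let X : Fin n → ℝ := fun i => x i / (3 * r ^ 3)
  let Y : Fin n → ℝ := fun i => y i / (4 * r ^ 6)
  let M : Fin n → ℝ := fun i => 3 / 2 * (u i - v i * w) / r ^ 3
  have r23 : (r : ℝ) ^ 2 ≤ r ^ 3 := pow_le_pow_right₀ (by linarith) (by norm_num)
  have huR : ∀ i, 0 ≤ (u i : ℝ) ∧ (u i : ℝ) ≤ r ^ 2 := fun i =>
    ⟨by exact_mod_cast (hu i).1, by exact_mod_cast (hu i).2.le⟩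
  have haR : ∀ i, 0 ≤ (a i : ℝ) ∧ (a i : ℝ) ≤ 2 * r ^ 6 := fun i =>
    ⟨by exact_mod_cast (ha i).1, by exact_mod_cast (ha i).2⟩
  have hvw : ∀ i, 0 ≤ v i * w ∧ v i * w ≤ 2 * r ^ 3 := by
    intro i
    have h1 : 0 ≤ (v i : ℝ) := by exact_mod_cast (hv i).1
    have h2 : (v i : ℝ) ≤ r ^ 2 := by exact_mod_cast (hv i).2.le
    refine ⟨mul_nonneg h1 hw0, ?_⟩
    calc v i * w ≤ r ^ 2 * (2 * r) := mul_le_mul h2 hwr hw0 (by positivity)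
      _ = _ := by ring
  have hbw : ∀ i, 0 ≤ b i * w ∧ b i * w ≤ 2 * r ^ 6 := by
    intro i
    have h1 : 0 ≤ (b i : ℝ) := by exact_mod_cast (hb i).1
    have h2 : (b i : ℝ) ≤ r ^ 5 := by exact_mod_cast (hb i).2.le
    refine ⟨mul_nonneg h1 hw0, ?_⟩
    calc b i * w ≤ r ^ 5 * (2 * r) := mul_le_mul h2 hwr hw0 (by positivity)
      _ = _ := by ring
  refine ⟨fun i => !₂[X i, Y i], fun i => AffineSubspace.mk' !₂[X i, Y i]
    (Submodule.span ℝ {!₂[1, M i]}), ?_, ?_, ?_, ?_⟩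
  · intro i
    rw [AffineSubspace.direction_mk']
    apply finrank_span_singleton
    intro h
    have := congrArg (fun v : EuclideanSpace ℝ (Fin 2) => v 0) h
    simp at this
  · intro i t
    fin_cases t
    · change 0 ≤ (u i + v i * w) / (3 * r ^ 3) ∧ (u i + v i * w) / (3 * r ^ 3) ≤ 1
      have := huR i
      have := hvw i
      refine ⟨div_nonneg (by linarith) (by positivity), ?_⟩
      rw [div_le_one (by positivity)]
      linarith
    · change 0 ≤ (a i + b i * w) / (4 * r ^ 6) ∧ (a i + b i * w) / (4 * r ^ 6) ≤ 1
      have := haR i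
      have := hbw i
      refine ⟨div_nonneg (by linarith) (by positivity), ?_⟩
      rw [div_le_one (by positivity)]
      linarith
  · intro i
    exact AffineSubspace.self_mem_mk' _ _
  · intro i j hij
    apply line_dist
    · change |3 / 2 * (u j - v j * w) / r ^ 3| ≤ 5
      rw [abs_div, abs_of_pos (by positivity : (0 : ℝ) < r ^ 3), div_le_iff₀ (by positivity), abs_le]
      have := huR j
      have := hvw j
      constructor <;> linarith
    · have key := sep r p d hr hp hp1 hp2 hd H (u j) (v j) (a j) (b j) (u i) (v i) (a i) (b i)
        (hu j) (hv j) (hu i) (hv i) (ha j) (ha i) (hb j) (hb i) (hm j) (hm i)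
        (hinj j i hij.symm) w hw0 hwd hwr
      have e : Y i - Y j - M j * (X i - X j) =
          (((a i + b i * w) - (a j + b j * w) -
            2 * (u j - v j * w) * ((u i + v i * w) - (u j + v j * w)) : ℝ)) / (4 * r ^ 6) := by
        simp only [X, Y, M, x, y]
        field_simp
        ring
      rw [e, abs_div, abs_of_pos (by positivity : (0 : ℝ) < 4 * r ^ 6), le_div_iff₀ (by positivity)]
      refine le_trans ?_ key
      calc 6 * (1 / (72 * 6 * 4096) * (n : ℝ) ^ ((1 : ℝ) / 13 - 1)) * (4 * r ^ 6)
          ≤ 6 * (1 / (72 * 6 * 4096) * (4096 / (r : ℝ) ^ 12)) * (4 * r ^ 6) := by gcongr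
        _ = 1 / (18 * (r : ℝ) ^ 6) := by field_simp; norm_num
end

section
/- There exist constants γ > 0 and c > 0 such that for every δ ∈ (0,1) there is a finite set X ⊆ Ω with |X| ≥ c · δ^(−1−γ) such that d(ω, ω') ≥ δ for all distinct ω, ω' ∈ X. -/
/-- The configuration space `Ω = [−1,1]² × [−1,1]`, with an element `(x, y, θ)`
corresponding to the point `(x, y)` together with the line through `(x, y)` of slope `θ`. -/
def Omega : Set (ℝ × ℝ × ℝ) :=
  Set.Icc (-1) 1 ×ˢ Set.Icc (-1) 1 ×ˢ Set.Icc (-1) 1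

/-- The vertical distance `d(ω, ω') = |y − y' − θ'(x − x')|`. -/
def vdist (ω ω' : ℝ × ℝ × ℝ) : ℝ :=
  |ω.2.1 - ω'.2.1 - ω'.2.2 * (ω.1 - ω'.1)|

/-- A base configuration of eight flags modulo 4. -/
def baseS : Finset (ℤ × ℤ × ℤ) :=
  {(3, 1, 0), (1, 2, 2), (0, 3, 1), (0, 2, 3), (2, 2, 1), (1, 3, 2), (3, 0, 0), (2, 3, 3)}

/-- The signed integer version of the vertical distance. -/
def idist (a b : ℤ × ℤ × ℤ) : ℤ := a.2.1 - b.2.1 - b.2.2 * (a.1 - b.1)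

lemma baseS_card : baseS.card = 8 := by decide

lemma baseS_range : ∀ a ∈ baseS, 0 ≤ a.1 ∧ a.1 < 4 ∧ 0 ≤ a.2.2 ∧ a.2.2 < 4 := by decide

lemma baseS_sep : ∀ a ∈ baseS, ∀ b ∈ baseS, a ≠ b → ¬ (4 : ℤ) ∣ idist a b := by
  unfold idist; decide

/-- One step of the digit construction. -/
def stepMap (k : ℕ) (q : (ℤ × ℤ × ℤ) × ℤ × (ℤ × ℤ × ℤ)) : ℤ × ℤ × ℤ :=
  (q.1.1 + 4 * q.2.2.1,
   (q.1.2.1 + q.1.2.2 * (4 * q.2.2.1) + 4 * q.2.1 + 16 * q.2.2.2.1) % 16 ^ (k + 1),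
   q.1.2.2 + 4 * q.2.2.2.2)

lemma step_sep (k : ℕ) (s s' : ℤ × ℤ × ℤ) (j j' : ℤ) (w w' : ℤ × ℤ × ℤ)
    (hs : s ∈ baseS) (hs' : s' ∈ baseS)
    (hj : 0 ≤ j ∧ j < 4) (hj' : 0 ≤ j' ∧ j' < 4)
    (hw : w ≠ w' → ¬ (16 : ℤ) ^ k ∣ idist w w')
    (hne : (s, j, w) ≠ (s', j', w')) :
    ¬ (16 : ℤ) ^ (k + 1) ∣ idist (stepMap k (s, j, w)) (stepMap k (s', j', w')) := by
  intro h
  have h2 : (16 : ℤ) ^ (k + 1) ∣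
      (s.2.1 + s.2.2 * (4 * w.1) + 4 * j + 16 * w.2.1)
      - (s'.2.1 + s'.2.2 * (4 * w'.1) + 4 * j' + 16 * w'.2.1)
      - (s'.2.2 + 4 * w'.2.2) * ((s.1 + 4 * w.1) - (s'.1 + 4 * w'.1)) := by
    have e1 := Int.dvd_self_sub_emod
      (x := s.2.1 + s.2.2 * (4 * w.1) + 4 * j + 16 * w.2.1) (m := (16 : ℤ) ^ (k + 1))
    have e2 := Int.dvd_self_sub_emod
      (x := s'.2.1 + s'.2.2 * (4 * w'.1) + 4 * j' + 16 * w'.2.1) (m := (16 : ℤ) ^ (k + 1))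
    have := (h.add e1).sub e2
    simp only [idist, stepMap] at this
    obtain ⟨c, hc⟩ := this
    exact ⟨c, by linear_combination hc⟩
  by_cases hss : s = s'
  · subst hss
    have h3 : (16 : ℤ) ^ (k + 1) ∣ 4 * (j - j') + 16 * idist w w' := by
      convert h2 using 1
      simp only [idist]; ring
    have h4 : (16 : ℤ) ∣ 4 * (j - j') + 16 * idist w w' :=
      (dvd_pow_self 16 (Nat.succ_ne_zero k)).trans h3
    have hjj : j = j' := by omega
    subst hjj
    have hww : w ≠ w' := by
      rintro rfl; exact hne rfl
    apply hw hww
    rw [sub_self, mul_zero, zero_add, pow_succ'] at h3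
    exact (mul_dvd_mul_iff_left (by norm_num)).1 h3
  · apply baseS_sep s hs s' hs' hss
    have h4 : (4 : ℤ) ∣ 16 ^ (k + 1) :=
      (show (4 : ℤ) ∣ 16 by norm_num).trans (dvd_pow_self 16 (Nat.succ_ne_zero k))
    have h5 := h4.trans h2
    have h6 : (4 : ℤ) ∣ 4 * (s.2.2 * w.1 + j + 4 * w.2.1 - s'.2.2 * w'.1 - j' - 4 * w'.2.1
      - w'.2.2 * ((s.1 + 4 * w.1) - (s'.1 + 4 * w'.1)) - s'.2.2 * (w.1 - w'.1)) :=
      dvd_mul_right _ _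
    have h7 := h5.sub h6
    ring_nf at h7
    have h8 : idist s s' = s.2.1 - s'.2.1 - s'.2.2 * (s.1 - s'.1) := rfl
    rw [h8]
    ring_nf
    exact h7

lemma int_construction (k : ℕ) : ∃ X : Finset (ℤ × ℤ × ℤ), X.card = 32 ^ k ∧
    (∀ a ∈ X, 0 ≤ a.1 ∧ a.1 < 4 ^ k ∧ 0 ≤ a.2.1 ∧ a.2.1 < 16 ^ k ∧ 0 ≤ a.2.2 ∧ a.2.2 < 4 ^ k) ∧
    (∀ a ∈ X, ∀ b ∈ X, a ≠ b → ¬ (16 : ℤ) ^ k ∣ idist a b) := by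
  induction k with
  | zero =>
    refine ⟨{(0, 0, 0)}, by simp, by simp, ?_⟩
    intro a ha b hb hab
    rw [Finset.mem_singleton] at ha hb
    exact absurd (ha.trans hb.symm) hab
  | succ k ih =>
    obtain ⟨X, hc, hr, hsep⟩ := ih
    have key : ∀ q ∈ baseS ×ˢ (Finset.Ico (0 : ℤ) 4) ×ˢ X,
        ∀ q' ∈ baseS ×ˢ (Finset.Ico (0 : ℤ) 4) ×ˢ X, q ≠ q' →
        ¬ (16 : ℤ) ^ (k + 1) ∣ idist (stepMap k q) (stepMap k q') := by
      rintro ⟨s, j, w⟩ hq ⟨s', j', w'⟩ hq' hne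
      simp only [Finset.mem_product, Finset.mem_Ico] at hq hq'
      exact step_sep k s s' j j' w w' hq.1 hq'.1 hq.2.1 hq'.2.1
        (hsep w hq.2.2 w' hq'.2.2) hne
    refine ⟨(baseS ×ˢ (Finset.Ico (0 : ℤ) 4) ×ˢ X).image (stepMap k), ?_, ?_, ?_⟩
    · rw [Finset.card_image_of_injOn]
      · rw [Finset.card_product, Finset.card_product, baseS_card, hc, Int.card_Ico]
        rw [show (4 - 0 : ℤ).toNat = 4 from rfl]
        ring
      · intro q hq q' hq' he
        by_contra hne
        apply key q hq q' hq' hne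
        rw [he]
        simp [idist]
    · intro a ha
      obtain ⟨⟨s, j, w⟩, hq, rfl⟩ := Finset.mem_image.1 ha
      simp only [Finset.mem_product, Finset.mem_Ico] at hq
      obtain ⟨h1, h2, h3, h4⟩ := baseS_range s hq.1
      obtain ⟨r1, r2, -, -, r5, r6⟩ := hr w hq.2.2
      have hp : (0 : ℤ) < 16 ^ (k + 1) := by positivity
      have e4 : (4 : ℤ) ^ (k + 1) = 4 * 4 ^ k := pow_succ' _ _
      simp only [stepMap]
      refine ⟨by omega, by omega, Int.emod_nonneg _ hp.ne', Int.emod_lt_of_pos _ hp,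
        by omega, by omega⟩
    · intro a ha b hb hab
      obtain ⟨q, hq, rfl⟩ := Finset.mem_image.1 ha
      obtain ⟨q', hq', rfl⟩ := Finset.mem_image.1 hb
      exact key q hq q' hq' (fun h => hab (by rw [h]))

/-- Rescaling integer flags into the unit cube. -/
noncomputable def rescale (k : ℕ) (a : ℤ × ℤ × ℤ) : ℝ × ℝ × ℝ :=
  ((a.1 : ℝ) / 4 ^ k, (a.2.1 : ℝ) / 16 ^ k, (a.2.2 : ℝ) / 4 ^ k)

lemma vdist_rescale (k : ℕ) (a b : ℤ × ℤ × ℤ) :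
    vdist (rescale k a) (rescale k b) = |(idist a b : ℝ)| / 16 ^ k := by
  have h16 : (16 : ℝ) ^ k = 4 ^ k * 4 ^ k := by rw [← mul_pow]; norm_num
  have hp : (0 : ℝ) < 4 ^ k := by positivity
  have h : (idist a b : ℝ) / 16 ^ k =
      (rescale k a).2.1 - (rescale k b).2.1
        - (rescale k b).2.2 * ((rescale k a).1 - (rescale k b).1) := by
    simp only [rescale, idist, h16]
    push_cast
    field_simp
  rw [vdist, ← h, abs_div, abs_of_pos (show (0 : ℝ) < 16 ^ k by positivity)]

lemma unit_mem (z n : ℤ) (N : ℝ) (hN : (n : ℝ) = N) (h0 : 0 ≤ z) (h1 : z < n) :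
    (z : ℝ) / N ∈ Set.Icc (-1 : ℝ) 1 := by
  subst hN
  have a0 : (0 : ℝ) ≤ z := by exact_mod_cast h0
  have a1 : (z : ℝ) < n := by exact_mod_cast h1
  have a2 : (0 : ℝ) < n := a0.trans_lt a1
  constructor
  · have : 0 ≤ (z : ℝ) / n := by positivity
    linarith
  · rw [div_le_one a2]; exact a1.le

/-- There exist constants `γ > 0` and `c > 0` such that for every `δ ∈ (0,1)`
there is a finite set `X ⊆ Ω` with `|X| ≥ c · δ^(−1−γ)` such that `d(ω, ω') ≥ δ`
for all distinct `ω, ω' ∈ X`. -/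
theorem stmt1 :
    ∃ γ c : ℝ, 0 < γ ∧ 0 < c ∧
      ∀ δ : ℝ, 0 < δ → δ < 1 →
        ∃ X : Finset (ℝ × ℝ × ℝ),
          ↑X ⊆ Omega ∧
          c * δ ^ (-1 - γ) ≤ (X.card : ℝ) ∧
          (∀ ω ∈ X, ∀ ω' ∈ X, ω ≠ ω' → δ ≤ vdist ω ω') := by
  refine ⟨1 / 4, 1 / 32, by norm_num, by norm_num, ?_⟩
  intro δ h0 h1
  obtain ⟨k, hk1, hk2⟩ := exists_nat_pow_near_of_lt_one (x := δ) (y := (1 / 16 : ℝ)) h0 h1.le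
    (by norm_num) (by norm_num)
  obtain ⟨X, hc, hr, hsep⟩ := int_construction k
  have hp : (0 : ℝ) < 16 ^ k := by positivity
  have key : ∀ a ∈ X, ∀ b ∈ X, a ≠ b → δ ≤ vdist (rescale k a) (rescale k b) := by
    intro a ha b hb hab
    rw [vdist_rescale]
    refine hk2.trans ?_
    rw [one_div, inv_pow, ← one_div]
    have hne : idist a b ≠ 0 := fun h => hsep a ha b hb hab (h ▸ dvd_zero _)
    have : (1 : ℝ) ≤ |(idist a b : ℝ)| := by exact_mod_cast Int.one_le_abs hne
    gcongr
  refine ⟨X.image (rescale k), ?_, ?_, ?_⟩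
  · intro ω hω
    obtain ⟨a, ha, rfl⟩ := Finset.mem_image.1 (Finset.mem_coe.1 hω)
    obtain ⟨r1, r2, r3, r4, r5, r6⟩ := hr a ha
    exact ⟨unit_mem _ _ _ (by push_cast; rfl) r1 r2, unit_mem _ _ _ (by push_cast; rfl) r3 r4,
      unit_mem _ _ _ (by push_cast; rfl) r5 r6⟩
  · rw [Finset.card_image_of_injOn, hc]
    · have e : ((1 / 16 : ℝ) ^ (k + 1)) ^ (-1 - 1 / 4 : ℝ) = 32 ^ (k + 1) := by
        rw [show (1 / 16 : ℝ) = (2 : ℝ) ^ (-4 : ℝ) by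
          rw [Real.rpow_neg (by norm_num)]; norm_num]
        rw [← Real.rpow_natCast, ← Real.rpow_mul (by norm_num), ← Real.rpow_mul (by norm_num),
          show (32 : ℝ) = (2 : ℝ) ^ (5 : ℝ) by norm_num, ← Real.rpow_natCast,
          ← Real.rpow_mul (by norm_num)]
        congr 1
        ring
      have h2 : δ ^ (-1 - 1 / 4 : ℝ) ≤ 32 ^ (k + 1) := by
        rw [← e]
        exact Real.rpow_le_rpow_of_nonpos (by positivity) hk1.le (by norm_num)
      push_cast
      rw [pow_succ] at h2
      linarith
    · intro a ha b hb he
      by_contra hne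
      have := key a ha b hb hne
      rw [he] at this
      simp [vdist] at this
      linarith
  · intro ω hω ω' hω' hne
    obtain ⟨a, ha, rfl⟩ := Finset.mem_image.1 hω
    obtain ⟨b, hb, rfl⟩ := Finset.mem_image.1 hω'
    exact key a ha b hb (fun h => hne (by rw [h]))
end

section
/- There exists a constant c₁ > 0 such that for every δ ∈ (0,1) there is a finite set X ⊆ Ω with |X| ≥ c₁ · δ^(−1) · log(1/δ) such that d(ω, ω') ≥ δ for all distinct ω, ω' ∈ X. -/
/-- Digit set: `α` a digit in base 5, `β` a digit in base 25 that is `0` or `2` mod 5. -/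
noncomputable def digT : Finset (ℤ × ℤ) :=
  (Finset.Ico (0 : ℤ) 5) ×ˢ ((Finset.Ico (0 : ℤ) 25).filter (fun b => b % 5 = 0 ∨ b % 5 = 2))

theorem digT_card : digT.card = 50 := by rfl

theorem digT_key {a b a' b' α β α' β' : ℤ} (h : (α, β) ∈ digT) (h' : (α', β') ∈ digT)
    (he : (25 * b + β) - (25 * b' + β') = ((5 * a + α) - (5 * a' + α')) ^ 2) :
    α = α' ∧ β = β' ∧ b - b' = (a - a') ^ 2 := by
  simp only [digT, Finset.mem_product, Finset.mem_filter, Finset.mem_Ico] at h h'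
  obtain ⟨⟨h1, h2⟩, ⟨h3, h4⟩, h5⟩ := h
  obtain ⟨⟨h1', h2'⟩, ⟨h3', h4'⟩, h5'⟩ := h'
  have hexp : ((5 * a + α) - (5 * a' + α')) ^ 2
      = 25 * (a - a') ^ 2 + 5 * (2 * (a - a') * (α - α')) + (α - α') ^ 2 := by ring
  rw [hexp] at he
  have hα : α = α' := by
    generalize (a - a') ^ 2 = u at he
    generalize 2 * (a - a') * (α - α') = v at he
    obtain ⟨w, hw⟩ : ∃ w, w = α - α' := ⟨_, rfl⟩
    rw [← hw] at he
    have hw1 : -5 < w := by omega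
    have hw2 : w < 5 := by omega
    by_contra hne
    have hw3 : w ≠ 0 := by omega
    clear hexp
    interval_cases w <;> norm_num at he hw3 <;> omega
  subst hα
  have hz : 25 * (a - a') ^ 2 + 5 * (2 * (a - a') * (α - α)) + (α - α) ^ 2
      = 25 * (a - a') ^ 2 := by ring
  rw [hz] at he
  generalize (a - a') ^ 2 = u at he ⊢
  refine ⟨rfl, ?_, ?_⟩ <;> omega

theorem exists_S (k : ℕ) : ∃ S : Finset (ℤ × ℤ), S.card = 50 ^ k ∧
    (∀ p ∈ S, 0 ≤ p.1 ∧ p.1 < 5 ^ k ∧ 0 ≤ p.2 ∧ p.2 < 25 ^ k) ∧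
    (∀ p ∈ S, ∀ q ∈ S, p.2 - q.2 = (p.1 - q.1) ^ 2 → p = q) := by
  induction k with
  | zero =>
    refine ⟨{(0, 0)}, by simp, by simp, ?_⟩
    intro p hp q hq _
    rw [Finset.mem_singleton] at hp hq
    rw [hp, hq]
  | succ k ih =>
    obtain ⟨S, hc, hb, hS⟩ := ih
    have key : ∀ x ∈ S ×ˢ digT, ∀ y ∈ S ×ˢ digT,
        (25 * x.1.2 + x.2.2) - (25 * y.1.2 + y.2.2)
          = ((5 * x.1.1 + x.2.1) - (5 * y.1.1 + y.2.1)) ^ 2 → x = y := by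
      rintro ⟨⟨a, b⟩, α, β⟩ hx ⟨⟨a', b'⟩, α', β'⟩ hy he
      rw [Finset.mem_product] at hx hy
      obtain ⟨e1, e2, e3⟩ := digT_key hx.2 hy.2 he
      have e4 := hS _ hx.1 _ hy.1 e3
      simp only [Prod.mk.injEq] at e4 ⊢
      exact ⟨e4, e1, e2⟩
    refine ⟨(S ×ˢ digT).image (fun x => (5 * x.1.1 + x.2.1, 25 * x.1.2 + x.2.2)), ?_, ?_, ?_⟩
    · rw [Finset.card_image_of_injOn, Finset.card_product, hc, digT_card, pow_succ]
      intro x hx y hy hxy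
      simp only [Prod.mk.injEq] at hxy
      apply key x hx y hy
      rw [hxy.1, hxy.2]; ring
    · intro p hp
      obtain ⟨⟨⟨a, b⟩, α, β⟩, hx, rfl⟩ := Finset.mem_image.1 hp
      rw [Finset.mem_product] at hx
      have h1 := hb _ hx.1
      have h2 := hx.2
      simp only [digT, Finset.mem_product, Finset.mem_filter, Finset.mem_Ico] at h1 h2 ⊢
      rw [pow_succ, pow_succ]
      refine ⟨?_, ?_, ?_, ?_⟩ <;> omega
    · intro p hp q hq hpq
      obtain ⟨x, hx, rfl⟩ := Finset.mem_image.1 hp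
      obtain ⟨y, hy, rfl⟩ := Finset.mem_image.1 hq
      rw [key x hx y hy hpq]

theorem exists_X (k : ℕ) : ∃ X : Finset (ℝ × ℝ × ℝ), ↑X ⊆ Omega ∧ X.card = 50 ^ k ∧
    (∀ ω ∈ X, ∀ ω' ∈ X, ω ≠ ω' → 1 / (4 * 25 ^ k) ≤ vdist ω ω') := by
  obtain ⟨S, hc, hb, hS⟩ := exists_S k
  have h25 : (25 : ℝ) ^ k = (5 ^ k) ^ 2 := by rw [← pow_mul, mul_comm, pow_mul]; norm_num
  have h5 : (0 : ℝ) < 5 ^ k := by positivity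
  set M : ℝ := 5 ^ k with hM
  let f : ℤ × ℤ → ℝ × ℝ × ℝ := fun p =>
    ((p.1 : ℝ) / (2 * M), ((p.1 : ℝ) ^ 2 + p.2) / (4 * M ^ 2), (p.1 : ℝ) / M)
  have hinj : Function.Injective f := by
    rintro ⟨a, b⟩ ⟨a', b'⟩ h
    simp only [f, Prod.mk.injEq] at h
    obtain ⟨_, h2, h3⟩ := h
    have e1 : (a : ℝ) = a' := by field_simp at h3; exact h3
    have e2 : (b : ℝ) = b' := by
      rw [e1] at h2; field_simp at h2; linarith
    rw [Int.cast_inj.1 e1, Int.cast_inj.1 e2]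
  refine ⟨S.image f, ?_, ?_, ?_⟩
  · intro ω hω
    obtain ⟨⟨a, b⟩, hp, rfl⟩ := Finset.mem_image.1 (Finset.mem_coe.1 hω)
    obtain ⟨h1, h2, h3, h4⟩ := hb _ hp
    have g1 : (0 : ℝ) ≤ a := by exact_mod_cast h1
    have g2 : (a : ℝ) ≤ M := by rw [hM]; exact_mod_cast h2.le
    have g3 : (0 : ℝ) ≤ b := by exact_mod_cast h3
    have g4 : (b : ℝ) ≤ M ^ 2 := by rw [← h25]; exact_mod_cast h4.le
    have g5 : (a : ℝ) ^ 2 ≤ M ^ 2 := by gcongr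
    have hM2 : 0 < M ^ 2 := by positivity
    simp only [Omega, Set.mem_prod, Set.mem_Icc, f]
    refine ⟨⟨?_, ?_⟩, ⟨?_, ?_⟩, ⟨?_, ?_⟩⟩
    · exact le_trans (by norm_num) (show (0 : ℝ) ≤ _ by positivity)
    · rw [div_le_one (by positivity)]; linarith
    · exact le_trans (by norm_num) (show (0 : ℝ) ≤ _ by positivity)
    · rw [div_le_one (by positivity)]; linarith
    · exact le_trans (by norm_num) (show (0 : ℝ) ≤ _ by positivity)
    · rw [div_le_one (by positivity)]; linarith
  · rw [Finset.card_image_of_injective _ hinj, hc]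
  · intro ω hω ω' hω' hne
    obtain ⟨p, hp, rfl⟩ := Finset.mem_image.1 hω
    obtain ⟨q, hq, rfl⟩ := Finset.mem_image.1 hω'
    have hpq : p.2 - q.2 + (p.1 - q.1) ^ 2 ≠ 0 := by
      intro h
      apply hne
      rw [hS q hq p hp (by linarith [sq_nonneg (p.1 - q.1), sub_sq_comm p.1 q.1])]
    have hZ : (1 : ℝ) ≤ |((p.2 - q.2 + (p.1 - q.1) ^ 2 : ℤ) : ℝ)| := by
      rw [← Int.cast_abs]; exact_mod_cast Int.one_le_abs hpq
    have he : (f p).2.1 - (f q).2.1 - (f q).2.2 * ((f p).1 - (f q).1)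
        = ((p.2 - q.2 + (p.1 - q.1) ^ 2 : ℤ) : ℝ) / (4 * M ^ 2) := by
      simp only [f]; push_cast; field_simp; ring
    rw [vdist, he, abs_div, abs_of_pos (show 0 < 4 * M ^ 2 by positivity), h25]
    gcongr

/-- There exists a constant `c₁ > 0` such that for every `δ ∈ (0,1)` there is
a finite set `X ⊆ Ω` with `|X| ≥ c₁ · δ⁻¹ · log(1/δ)` such that `d(ω, ω') ≥ δ` for all
distinct `ω, ω' ∈ X`. -/
theorem stmt2 :
    ∃ c₁ : ℝ, 0 < c₁ ∧
      ∀ δ : ℝ, 0 < δ → δ < 1 →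
        ∃ X : Finset (ℝ × ℝ × ℝ),
          ↑X ⊆ Omega ∧
          c₁ * δ⁻¹ * Real.log (1 / δ) ≤ (X.card : ℝ) ∧
          (∀ ω ∈ X, ∀ ω' ∈ X, ω ≠ ω' → δ ≤ vdist ω ω') := by
  refine ⟨1 / 20000, by norm_num, ?_⟩
  intro δ h0 h1
  have hk : ∃ k : ℕ, δ⁻¹ ≤ 100 * 25 ^ k ∧ (k = 0 ∨ δ ≤ 1 / (4 * 25 ^ k)) := by
    by_cases hδ : δ ≤ 1 / 4
    · have hx : 1 ≤ δ⁻¹ / 4 := by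
        have := inv_anti₀ h0 hδ
        norm_num at this
        linarith
      obtain ⟨k, hk1, hk2⟩ := exists_nat_pow_near hx (show (1 : ℝ) < 25 by norm_num)
      refine ⟨k, by rw [pow_succ] at hk2; linarith, Or.inr ?_⟩
      rw [le_div_iff₀ (by positivity)]
      calc δ * (4 * 25 ^ k) ≤ δ * (4 * (δ⁻¹ / 4)) := by gcongr
        _ = 1 := by field_simp
    · refine ⟨0, ?_, Or.inl rfl⟩
      push Not at hδ
      have := inv_anti₀ (by norm_num) hδ.le
      norm_num at this ⊢
      linarith
  obtain ⟨k, hk1, hk2⟩ := hk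
  obtain ⟨X, hX, hc, hd⟩ := exists_X k
  refine ⟨X, hX, ?_, ?_⟩
  · rw [hc, one_div δ]
    have hinv : 0 < δ⁻¹ := by positivity
    have hlog0 : 0 ≤ Real.log δ⁻¹ := Real.log_nonneg ((one_le_inv₀ h0).2 h1.le)
    have hlog : Real.log δ⁻¹ ≤ 200 * 2 ^ k := by
      have a1 : Real.log δ⁻¹ ≤ Real.log (100 * 25 ^ k) := Real.log_le_log hinv hk1
      rw [Real.log_mul (by norm_num) (by positivity), Real.log_pow] at a1
      have a2 := Real.log_le_sub_one_of_pos (show (0 : ℝ) < 100 by norm_num)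
      have a3 := Real.log_le_sub_one_of_pos (show (0 : ℝ) < 25 by norm_num)
      have a4 : (k : ℝ) ≤ 2 ^ k := by exact_mod_cast (Nat.lt_two_pow_self (n := k)).le
      have a5 : (1 : ℝ) ≤ 2 ^ k := one_le_pow₀ (by norm_num)
      have a6 : (k : ℝ) * Real.log 25 ≤ k * (25 - 1) := by gcongr
      linarith
    have h50 : (50 : ℝ) ^ k = 25 ^ k * 2 ^ k := by rw [← mul_pow]; norm_num
    push_cast
    rw [h50]
    have := mul_le_mul hk1 hlog hlog0 (by positivity)
    linarith
  · intro ω hω ω' hω' hne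
    rcases hk2 with rfl | hk2
    · rw [pow_zero] at hc
      exact absurd (Finset.card_le_one.1 hc.le ω hω ω' hω') hne
    · exact hk2.trans (hd ω hω ω' hω' hne)
end

section
/- For every integer n ≥ 2, any points p₁, …, pₙ ∈ [0,1]² and any lines ℓ₁, …, ℓₙ in ℝ² with pᵢ ∈ ℓᵢ for every i, there exist indices i ≠ j such that the Euclidean distance from pᵢ to the line ℓⱼ is at most √2 / ⌊√(n−1)⌋. -/
lemma cell_close (k : ℕ) (hk : 1 ≤ k) (x y : ℝ) (hx : x ∈ Set.Icc (0:ℝ) 1)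
    (hy : y ∈ Set.Icc (0:ℝ) 1) (h : min ⌊k * x⌋₊ (k-1) = min ⌊k * y⌋₊ (k-1)) :
    |x - y| ≤ 1 / k := by
  have hk0 : (0:ℝ) < k := by exact_mod_cast hk
  have key : ∀ z ∈ Set.Icc (0:ℝ) 1, ((min ⌊k * z⌋₊ (k-1) : ℕ) : ℝ) ≤ k * z ∧
      k * z ≤ ((min ⌊k * z⌋₊ (k-1) : ℕ) : ℝ) + 1 := by
    intro z hz
    have h0 : 0 ≤ k * z := mul_nonneg hk0.le hz.1
    have h1 := Nat.floor_le h0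
    have h2 := Nat.lt_floor_add_one (k * z)
    have h3 : (k:ℝ) * z ≤ k := by nlinarith [hz.2]
    rcases le_total ⌊k * z⌋₊ (k-1) with h4 | h4
    · rw [min_eq_left h4]; exact ⟨h1, h2.le⟩
    · rw [min_eq_right h4]
      have h5 : ((k - 1 : ℕ) : ℝ) ≤ (⌊k * z⌋₊ : ℝ) := by exact_mod_cast h4
      have h6 : ((k - 1 : ℕ) : ℝ) = k - 1 := by push_cast [hk]; ring
      constructor <;> linarith
  have a := key x hx
  have b := key y hy
  rw [h] at a
  rw [abs_le, ← neg_div, div_le_iff₀ hk0, le_div_iff₀ hk0]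
  constructor <;> nlinarith [a.1, a.2, b.1, b.2]

/-- For every integer `n ≥ 2`, any points `p₁, …, pₙ ∈ [0,1]²` and any lines
`ℓ₁, …, ℓₙ` in `ℝ²` (one-dimensional affine subspaces) with `pᵢ ∈ ℓᵢ` for every `i`, there
exist indices `i ≠ j` such that the Euclidean distance from `pᵢ` to the line `ℓⱼ` is at
most `√2 / ⌊√(n−1)⌋`. -/
theorem stmt7 (n : ℕ) (hn : 2 ≤ n) (p : Fin n → EuclideanSpace ℝ (Fin 2))
    (ℓ : Fin n → AffineSubspace ℝ (EuclideanSpace ℝ (Fin 2)))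
    (hdim : ∀ i, Module.finrank ℝ (ℓ i).direction = 1)
    (hp : ∀ i, ∀ t, p i t ∈ Set.Icc (0 : ℝ) 1)
    (hmem : ∀ i, p i ∈ ℓ i) :
    ∃ i j : Fin n, i ≠ j ∧
      Metric.infDist (p i) (ℓ j : Set (EuclideanSpace ℝ (Fin 2))) ≤
        Real.sqrt 2 / (⌊Real.sqrt ((n : ℝ) - 1)⌋ : ℝ) := by
  have hfl : ⌊Real.sqrt ((n : ℝ) - 1)⌋ = (Nat.sqrt (n - 1) : ℤ) := by
    have : ((n:ℝ) - 1) = ((n - 1 : ℕ) : ℝ) := by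
      rw [Nat.cast_sub (by omega)]; simp
    rw [this, Real.floor_real_sqrt_eq_nat_sqrt]
  rw [hfl]
  set k := Nat.sqrt (n - 1) with hkdef
  have hk : 1 ≤ k := Nat.le_sqrt.2 (by omega)
  have hkn : k * k < n := by have := Nat.sqrt_le (n - 1); rw [← hkdef] at this; omega
  have hk0 : (0:ℝ) < k := by exact_mod_cast hk
  let f : Fin n → ℕ × ℕ := fun i => (min ⌊k * p i 0⌋₊ (k-1), min ⌊k * p i 1⌋₊ (k-1))
  obtain ⟨i, -, j, -, hij, he⟩ := Finset.exists_ne_map_eq_of_card_lt_of_maps_to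
    (s := (Finset.univ : Finset (Fin n))) (t := Finset.range k ×ˢ Finset.range k) (f := f)
    (by simpa using hkn)
    (by
      intro i _
      have h : ∀ m, min m (k-1) < k := fun m => by omega
      simp only [f, Finset.coe_product, Set.mem_prod, Finset.mem_coe, Finset.mem_range]
      exact ⟨h _, h _⟩)
  refine ⟨i, j, hij, (Metric.infDist_le_dist_of_mem (hmem j)).trans ?_⟩
  have he' := Prod.mk.inj he
  have h0 := cell_close k hk _ _ (hp i 0) (hp j 0) he'.1
  have h1 := cell_close k hk _ _ (hp i 1) (hp j 1) he'.2
  rw [EuclideanSpace.dist_eq, Fin.sum_univ_two, Real.dist_eq, Real.dist_eq]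
  rw [Real.sqrt_le_left (by positivity), div_pow, Real.sq_sqrt (by norm_num)]
  have g0 := pow_le_pow_left₀ (abs_nonneg _) h0 2
  have g1 := pow_le_pow_left₀ (abs_nonneg _) h1 2
  rw [div_pow, one_pow] at g0 g1
  have : (2:ℝ) / ((k:ℤ):ℝ) ^ 2 = 1 / (k:ℝ)^2 + 1 / (k:ℝ)^2 := by push_cast; ring
  rw [this]
  linarith
end

section
/- Let ω = (x, y, θ) and ω' = (x', y', θ') be elements of ℝ² × ℝ with |θ'| ≤ 1, and let ℓ' be the line through the point (x', y') with direction vector (1, θ'). Then d(ω, ω')/√2 ≤ dist((x, y), ℓ') ≤ d(ω, ω'), where dist((x,y), ℓ') is the Euclidean distance from the point (x, y) to the line ℓ'. -/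
/-- The point of `ℝ²` (with the Euclidean metric) with coordinates `(a, b)`. -/
noncomputable def toE2 (a b : ℝ) : EuclideanSpace ℝ (Fin 2) :=
  (WithLp.equiv 2 (Fin 2 → ℝ)).symm ![a, b]

/-- Let `ω = (x, y, θ)` and `ω' = (x', y', θ')` be elements of `ℝ² × ℝ` with
`|θ'| ≤ 1`, and let `ℓ'` be the line through the point `(x', y')` with direction vector
`(1, θ')`. Then `d(ω, ω')/√2 ≤ dist((x, y), ℓ') ≤ d(ω, ω')`. -/
theorem stmt8 (x y θ x' y' θ' : ℝ) (hθ' : |θ'| ≤ 1)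
    (ℓ' : AffineSubspace ℝ (EuclideanSpace ℝ (Fin 2)))
    (hℓ' : ℓ' = AffineSubspace.mk' (toE2 x' y') (Submodule.span ℝ {toE2 1 θ'})) :
    vdist (x, y, θ) (x', y', θ') / Real.sqrt 2 ≤
      Metric.infDist (toE2 x y) (ℓ' : Set (EuclideanSpace ℝ (Fin 2))) ∧
    Metric.infDist (toE2 x y) (ℓ' : Set (EuclideanSpace ℝ (Fin 2))) ≤
      vdist (x, y, θ) (x', y', θ') := by
  have hd : ∀ a b c d : ℝ, dist (toE2 a b) (toE2 c d) = Real.sqrt ((a - c) ^ 2 + (b - d) ^ 2) := by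
    intro a b c d
    simp [toE2, EuclideanSpace.dist_eq, Fin.sum_univ_two, Real.dist_eq, sq_abs]
  have hp : ∀ t : ℝ, t • toE2 1 θ' +ᵥ toE2 x' y' = toE2 (x' + t) (y' + t * θ') := by
    intro t
    ext i
    fin_cases i <;> simp [toE2, add_comm]
  have hmem : ∀ t : ℝ, toE2 (x' + t) (y' + t * θ') ∈ (ℓ' : Set (EuclideanSpace ℝ (Fin 2))) := by
    intro t
    rw [hℓ', ← hp t]
    simp only [SetLike.mem_coe, AffineSubspace.mem_mk', vadd_vsub]
    exact Submodule.smul_mem _ _ (Submodule.mem_span_singleton_self _)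
  have hex : ∀ p ∈ (ℓ' : Set (EuclideanSpace ℝ (Fin 2))), ∃ t : ℝ,
      p = toE2 (x' + t) (y' + t * θ') := by
    intro p h
    rw [hℓ', SetLike.mem_coe, AffineSubspace.mem_mk', Submodule.mem_span_singleton] at h
    obtain ⟨t, ht⟩ := h
    exact ⟨t, by rw [← hp t, ht, vsub_vadd]⟩
  have hθ2 : θ' ^ 2 ≤ 1 := by
    rw [← sq_abs]
    nlinarith [abs_nonneg θ']
  constructor
  · rw [Metric.infDist_eq_iInf]
    have : Nonempty (ℓ' : Set (EuclideanSpace ℝ (Fin 2))) := ⟨⟨_, hmem 0⟩⟩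
    apply le_ciInf
    rintro ⟨p, h⟩
    obtain ⟨t, rfl⟩ := hex p h
    simp only [vdist]
    rw [hd, div_le_iff₀ (by positivity), ← Real.sqrt_mul (by positivity)]
    apply Real.abs_le_sqrt
    set a := x - (x' + t) with ha
    set b := y - (y' + t * θ') with hb
    have e : y - y' - θ' * (x - x') = b - θ' * a := by rw [ha, hb]; ring
    rw [e]
    nlinarith [sq_nonneg (a + θ' * b), mul_nonneg (sub_nonneg.2 hθ2) (add_nonneg (sq_nonneg a) (sq_nonneg b))]
  · refine (Metric.infDist_le_dist_of_mem (hmem (x - x'))).trans ?_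
    rw [hd]
    · simp only [vdist]
      rw [← Real.sqrt_sq_eq_abs]
      apply Real.sqrt_le_sqrt
      apply le_of_eq
      ring
end

section
/- For every integer n ≥ 2 and any n distinct points in [0,1]², there exist at least n/10 pairwise disjoint (unordered) pairs {pᵢ, qᵢ} of these points such that for every pair the Euclidean distance between pᵢ and qᵢ is at most 2·n^(−1/2). -/
/-- Greedy extraction of disjoint monochromatic pairs. -/
theorem greedy_pairs {α C : Type*} [DecidableEq α] [Fintype C] (f : α → C) (m : ℕ) :
    ∀ S : Finset α, 2 * m + Fintype.card C ≤ S.card + 1 →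
    ∃ a b : Fin m → α, Function.Injective a ∧ Function.Injective b ∧
      (∀ i j, a i ≠ b j) ∧ (∀ i, a i ∈ S) ∧ (∀ i, b i ∈ S) ∧ (∀ i, f (a i) = f (b i)) := by
  induction m with
  | zero =>
    intro S _
    exact ⟨Fin.elim0, Fin.elim0, fun i => i.elim0, fun i => i.elim0, fun i => i.elim0,
      fun i => i.elim0, fun i => i.elim0, fun i => i.elim0⟩
  | succ m ih =>
    intro S hS
    obtain ⟨x, hx, y, hy, hxy, hf⟩ := Finset.exists_ne_map_eq_of_card_lt_of_maps_to
      (s := S) (t := (Finset.univ : Finset C)) (f := f)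
      (by rw [Finset.card_univ]; omega) (fun _ _ => by simp)
    have hy' : y ∈ S.erase x := Finset.mem_erase.2 ⟨hxy.symm, hy⟩
    have h1 := Finset.card_erase_of_mem hx
    have h2 := Finset.card_erase_of_mem hy'
    obtain ⟨a, b, ha, hb, hab, haS, hbS, hfab⟩ := ih ((S.erase x).erase y) (by omega)
    simp only [Finset.mem_erase] at haS hbS
    refine ⟨Fin.cons x a, Fin.cons y b, ?_, ?_, ?_, ?_, ?_, ?_⟩
    · rw [Fin.cons_injective_iff]
      refine ⟨?_, ha⟩
      rintro ⟨i, hi⟩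
      exact (haS i).2.1 hi
    · rw [Fin.cons_injective_iff]
      refine ⟨?_, hb⟩
      rintro ⟨i, hi⟩
      exact (hbS i).1 hi
    · intro i j
      refine Fin.cases ?_ (fun i => ?_) i <;> refine Fin.cases ?_ (fun j => ?_) j
      · simpa using hxy
      · simpa using fun h => (hbS j).2.1 h.symm
      · simpa using (haS i).1
      · simpa using hab i j
    · intro i
      refine Fin.cases ?_ (fun i => ?_) i
      · simpa using hx
      · simpa using (haS i).2.2
    · intro i
      refine Fin.cases ?_ (fun i => ?_) i
      · simpa using hy
      · simpa using (hbS i).2.2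
    · intro i
      refine Fin.cases ?_ (fun i => ?_) i
      · simpa using hf
      · simpa using hfab i

/-- Index of the grid strip containing `x`. -/
noncomputable def strip (A : ℕ) (x : ℝ) : Fin (A + 1) :=
  ⟨min ⌊((A : ℝ) + 1) * x⌋₊ A, by omega⟩

theorem strip_bounds (A : ℕ) (x : ℝ) (hx : x ∈ Set.Icc (0 : ℝ) 1) :
    ((strip A x : ℕ) : ℝ) ≤ ((A : ℝ) + 1) * x ∧ ((A : ℝ) + 1) * x ≤ ((strip A x : ℕ) : ℝ) + 1 := by
  obtain ⟨h0, h1⟩ := hx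
  have hA : (0 : ℝ) ≤ A := Nat.cast_nonneg A
  have hpos : 0 ≤ ((A : ℝ) + 1) * x := by positivity
  have hle := Nat.floor_le hpos
  have hlt := Nat.lt_floor_add_one (((A : ℝ) + 1) * x)
  simp only [strip, Nat.cast_min]
  constructor
  · exact (min_le_left _ _).trans hle
  · rcases min_cases (⌊((A : ℝ) + 1) * x⌋₊ : ℝ) (A : ℝ) with h | h
    · rw [h.1]; exact hlt.le
    · rw [h.1]; nlinarith

theorem strip_close (A : ℕ) (x y : ℝ) (hx : x ∈ Set.Icc (0 : ℝ) 1) (hy : y ∈ Set.Icc (0 : ℝ) 1)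
    (h : strip A x = strip A y) : (x - y) ^ 2 ≤ 1 / ((A : ℝ) + 1) ^ 2 := by
  have h1 := strip_bounds A x hx
  have h2 := strip_bounds A y hy
  rw [h] at h1
  have hA : (0 : ℝ) ≤ A := Nat.cast_nonneg A
  rw [le_div_iff₀ (by positivity), ← mul_pow]
  rw [sq_le_one_iff_abs_le_one, abs_le]
  constructor <;> nlinarith

theorem dist_bound (n : ℕ) (hn : 2 ≤ n) (x y : EuclideanSpace ℝ (Fin 2))
    (h : (x 0 - y 0) ^ 2 + (x 1 - y 1) ^ 2 ≤ 4 / n) :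
    dist x y ≤ 2 * (n : ℝ) ^ (-(1 / 2) : ℝ) := by
  have hn0 : (0 : ℝ) < n := by positivity
  rw [EuclideanSpace.dist_eq, Fin.sum_univ_two, Real.dist_eq, Real.dist_eq, sq_abs, sq_abs]
  apply Real.sqrt_le_iff.2
  refine ⟨by positivity, h.trans (le_of_eq ?_)⟩
  rw [mul_pow, ← Real.rpow_natCast ((n : ℝ) ^ _), ← Real.rpow_mul hn0.le]
  norm_num
  rw [Real.rpow_neg_one]
  rfl

theorem grid_case (n : ℕ) (hn : 2 ≤ n) (p : Fin n → EuclideanSpace ℝ (Fin 2))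
    (hp : ∀ i, ∀ t, p i t ∈ Set.Icc (0 : ℝ) 1) (A B m : ℕ)
    (h1 : n * ((A + 1) ^ 2 + (B + 1) ^ 2) ≤ 4 * (A + 1) ^ 2 * (B + 1) ^ 2)
    (h2 : 2 * m + (A + 1) * (B + 1) ≤ n + 1) (h3 : n ≤ 10 * m) :
    ∃ (m : ℕ) (a b : Fin m → Fin n),
      (n : ℝ) / 10 ≤ (m : ℝ) ∧
      Function.Injective a ∧
      Function.Injective b ∧
      (∀ i j : Fin m, a i ≠ b j) ∧
      (∀ i : Fin m, dist (p (a i)) (p (b i)) ≤ 2 * (n : ℝ) ^ (-(1 / 2) : ℝ)) := by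
  obtain ⟨a, b, ha, hb, hab, -, -, hf⟩ := greedy_pairs
    (fun i => (strip A (p i 0), strip B (p i 1))) m (Finset.univ : Finset (Fin n))
    (by simpa using h2)
  have h3' : (n : ℝ) ≤ 10 * m := by exact_mod_cast h3
  refine ⟨m, a, b, by linarith, ha, hb, hab, fun i => dist_bound n hn _ _ ?_⟩
  have hfi := hf i
  simp only [Prod.mk.injEq] at hfi
  have e1 := strip_close A _ _ (hp _ _) (hp _ _) hfi.1
  have e2 := strip_close B _ _ (hp _ _) (hp _ _) hfi.2
  refine (add_le_add e1 e2).trans ?_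
  have hn0 : (0 : ℝ) < n := by positivity
  have h1' : (n : ℝ) * (((A : ℝ) + 1) ^ 2 + ((B : ℝ) + 1) ^ 2)
    ≤ 4 * ((A : ℝ) + 1) ^ 2 * ((B : ℝ) + 1) ^ 2 := by exact_mod_cast h1
  rw [div_add_div _ _ (by positivity) (by positivity), div_le_div_iff₀ (by positivity) hn0]
  linarith

theorem four_ineq (x1 x2 x3 x4 : ℝ) (h1 : 0 ≤ x1) (h1' : x1 ≤ 1 / 2) (h4 : 0 ≤ x4)
    (h4' : x4 ≤ 1 / 2) (h2 : 1 / 2 ≤ x2) (h2' : x2 ≤ 1) (h3 : 1 / 2 ≤ x3) (h3' : x3 ≤ 1) :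
    (x1 - x2) ^ 2 + (x2 - x3) ^ 2 + (x3 - x4) ^ 2 + (x4 - x1) ^ 2 ≤ 2 := by
  have a1 : (x1 - x2) ^ 2 ≤ x2 - x1 := by nlinarith
  have a2 : (x3 - x4) ^ 2 ≤ x3 - x4 := by nlinarith
  have a3 : (x4 - x1) ^ 2 ≤ x4 + x1 := by nlinarith
  have a4 : (x2 - x3) ^ 2 ≤ (1 - x2) + (1 - x3) := by nlinarith
  linarith

theorem four_case (p : Fin 4 → EuclideanSpace ℝ (Fin 2))
    (hp : ∀ i, ∀ t, p i t ∈ Set.Icc (0 : ℝ) 1) :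
    ∃ i j : Fin 4, i ≠ j ∧ (p i 0 - p j 0) ^ 2 + (p i 1 - p j 1) ^ 2 ≤ 1 := by
  by_contra! hcon
  let f : Fin 4 → Bool × Bool := fun i => (decide (p i 0 ≤ 1 / 2), decide (p i 1 ≤ 1 / 2))
  have hinj : Function.Injective f := by
    intro i j hij
    by_contra hne
    have := hcon i j hne
    simp only [f, Prod.mk.injEq, decide_eq_decide] at hij
    have key : ∀ t, (p i t ≤ 1 / 2 ↔ p j t ≤ 1 / 2) → (p i t - p j t) ^ 2 ≤ 1 / 4 := by
      intro t ht
      obtain ⟨u1, u2⟩ := hp i t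
      obtain ⟨v1, v2⟩ := hp j t
      by_cases h : p i t ≤ 1 / 2
      · have := ht.1 h
        nlinarith
      · have h' : ¬ p j t ≤ 1 / 2 := fun h' => h (ht.2 h')
        push Not at h h'
        nlinarith
    linarith [key 0 hij.1, key 1 hij.2]
  have hsurj : Function.Surjective f :=
    ((Fintype.bijective_iff_injective_and_card f).2 ⟨hinj, by simp⟩).2
  obtain ⟨a, ha⟩ := hsurj (true, true)
  obtain ⟨b, hb⟩ := hsurj (false, true)
  obtain ⟨c, hc⟩ := hsurj (false, false)
  obtain ⟨d, hd⟩ := hsurj (true, false)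
  have nab : a ≠ b := by rintro rfl; simp [ha] at hb
  have nbc : b ≠ c := by rintro rfl; simp [hb] at hc
  have ncd : c ≠ d := by rintro rfl; simp [hc] at hd
  have nda : d ≠ a := by rintro rfl; simp [hd] at ha
  simp only [f, Prod.mk.injEq, decide_eq_true_eq, decide_eq_false_iff_not, not_le] at ha hb hc hd
  have X := four_ineq (p a 0) (p b 0) (p c 0) (p d 0) (hp a 0).1 ha.1 (hp d 0).1 hd.1
    hb.1.le (hp b 0).2 hc.1.le (hp c 0).2
  have Y := four_ineq (p b 1) (p c 1) (p d 1) (p a 1) (hp b 1).1 hb.2 (hp a 1).1 ha.2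
    hc.2.le (hp c 1).2 hd.2.le (hp d 1).2
  linarith [hcon a b nab, hcon b c nbc, hcon c d ncd, hcon d a nda]

/-- For every integer `n ≥ 2` and any `n` distinct points `p₁, …, pₙ ∈
[0,1]²`, there exist at least `n/10` pairwise disjoint (unordered) pairs `{p (a i), p (b i)}`
of these points (no point belongs to more than one pair) such that for every pair the
Euclidean distance between its two points is at most `2·n^(−1/2)`. -/
theorem stmt12 (n : ℕ) (hn : 2 ≤ n) (p : Fin n → EuclideanSpace ℝ (Fin 2))
    (hinj : Function.Injective p)
    (hp : ∀ i, ∀ t, p i t ∈ Set.Icc (0 : ℝ) 1) :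
    ∃ (m : ℕ) (a b : Fin m → Fin n),
      (n : ℝ) / 10 ≤ (m : ℝ) ∧
      Function.Injective a ∧
      Function.Injective b ∧
      (∀ i j : Fin m, a i ≠ b j) ∧
      (∀ i : Fin m, dist (p (a i)) (p (b i)) ≤ 2 * (n : ℝ) ^ (-(1 / 2) : ℝ)) := by

  by_cases hbig : 33 ≤ n
  · have hs1 := Nat.sqrt_le' ((n - 1) / 2)
    have hs2 := Nat.lt_succ_sqrt' ((n - 1) / 2)
    have hs4 : 4 ≤ Nat.sqrt ((n - 1) / 2) := Nat.le_sqrt.2 (by omega)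
    set g := Nat.sqrt ((n - 1) / 2) with hg
    simp only [Nat.succ_eq_add_one] at hs2
    have k1 : n ≤ 2 * (g + 1) ^ 2 := by omega
    have k2 : 2 * g ^ 2 + 1 ≤ n := by omega
    have k3 : 5 * (g + 1) ^ 2 ≤ 8 * g ^ 2 := by nlinarith
    refine grid_case n hn p hp g g ((n + 9) / 10) ?_ ?_ (by omega)
    · nlinarith [Nat.mul_le_mul_right ((g + 1) ^ 2) k1]
    · rw [← sq]
      omega
  · push Not at hbig
    by_cases h4 : n = 4
    · subst h4
      obtain ⟨i, j, hij, hd⟩ := four_case p hp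
      refine ⟨1, fun _ => i, fun _ => j, by norm_num, Function.injective_of_subsingleton _,
        Function.injective_of_subsingleton _, fun _ _ => hij, fun _ => dist_bound 4 hn _ _ ?_⟩
      norm_num
      exact hd
    by_cases c2 : n = 2
    · exact grid_case n hn p hp 0 0 1 (by subst c2; norm_num) (by omega) (by omega)
    by_cases c3 : n = 3
    · exact grid_case n hn p hp 0 1 1 (by subst c3; norm_num) (by omega) (by omega)
    by_cases c8 : n ≤ 8
    · exact grid_case n hn p hp 1 1 1 (by norm_num; omega) (by omega) (by omega)
    by_cases c12 : n ≤ 12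
    · exact grid_case n hn p hp 1 3 ((n + 9) / 10) (by norm_num; omega) (by omega) (by omega)
    by_cases c18 : n ≤ 18
    · exact grid_case n hn p hp 2 2 2 (by norm_num; omega) (by omega) (by omega)
    · exact grid_case n hn p hp 3 3 ((n + 9) / 10) (by norm_num; omega) (by omega) (by omega)
end

section
/- Let C ≥ 5 and let w ∈ (0, 1/(4C²)). Let (p₁, θ₁), …, (p_k, θ_k) ∈ [−1/2, 1/2]² × [−1/2, 1/2] be configurations such that d((pᵢ, θᵢ), (pᵢ', θᵢ')) ≥ C²·w for all i ≠ i'. For i ∈ {1, …, k} and each integer j with |j| ≤ 1/w, set p_{i,j} = pᵢ + (0, C·j·w²) and let ψ_{i,j} = ψ^(w)_{p_{i,j}, θᵢ}. Let δ₀ > 0 and let X ⊆ Ω be a set with d(ω, ω') ≥ δ₀ for all distinct ω, ω' ∈ X. Then: (a) the map (i, j, ω) ↦ ψ_{i,j}(ω) is injective on {1,…,k} × {j ∈ ℤ : |j| ≤ 1/w} × X, and (b) for any two distinct elements ω̃, ω̃' of X̃ = ⋃_{i, |j| ≤ 1/w} ψ_{i,j}(X) one has d(ω̃, ω̃') ≥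 w² · min(δ₀, 1). -/
/-- The affine rescaling map
`ψ^(w)_{(x₀,y₀),θ₀}(x, y, θ) = (x₀ + w·x, y₀ + w·θ₀·x + w²·y, θ₀ + w·θ)`. -/
def psimap (w x₀ y₀ θ₀ : ℝ) (ω : ℝ × ℝ × ℝ) : ℝ × ℝ × ℝ :=
  (x₀ + w * ω.1, y₀ + w * θ₀ * ω.1 + w ^ 2 * ω.2.1, θ₀ + w * ω.2.2)

/-- Core estimate when the base configurations are distinct. -/
lemma aux_diff (C w A J J' x y y' t' x' T P : ℝ) (hC : 5 ≤ C) (hw0 : 0 < w) (hw1 : w < 1)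
    (hA : C ^ 2 * w ≤ |A|) (hJ : |J| ≤ 1 / w) (hJ' : |J'| ≤ 1 / w)
    (hx : |x| ≤ 1) (hx' : |x'| ≤ 1) (hy : |y| ≤ 1) (hy' : |y'| ≤ 1) (ht' : |t'| ≤ 1)
    (hT : |T| ≤ 1) (hP : |P| ≤ 1) :
    w ^ 2 ≤ |A + (C * (J - J') * w ^ 2 + w * (x * T) + w ^ 2 * (y - y') - w * (t' * P)
      - w ^ 2 * (t' * (x - x')))| := by
  have e1 : |C * (J - J') * w ^ 2| ≤ 2 * C * w := by
    have h : |J - J'| ≤ 2 * (1 / w) := by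
      have := abs_sub J J'
      linarith
    rw [abs_mul, abs_mul, abs_of_nonneg (by linarith : 0 ≤ C), abs_of_pos (by positivity : 0 < w ^ 2)]
    calc C * |J - J'| * w ^ 2 ≤ C * (2 * (1 / w)) * w ^ 2 := by gcongr
      _ = 2 * C * w := by field_simp
  have e2 : |w * (x * T)| ≤ w := by
    rw [abs_mul, abs_mul, abs_of_pos hw0]
    have := mul_le_one₀ hx (abs_nonneg T) hT
    nlinarith
  have e3 : |w ^ 2 * (y - y')| ≤ 2 * w ^ 2 := by
    rw [abs_mul, abs_of_pos (by positivity : 0 < w ^ 2)]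
    have := abs_sub y y'
    nlinarith [sq_nonneg w]
  have e4 : |w * (t' * P)| ≤ w := by
    rw [abs_mul, abs_mul, abs_of_pos hw0]
    have := mul_le_one₀ ht' (abs_nonneg P) hP
    nlinarith
  have e5 : |w ^ 2 * (t' * (x - x'))| ≤ 2 * w ^ 2 := by
    rw [abs_mul, abs_mul, abs_of_pos (by positivity : 0 < w ^ 2)]
    have h := abs_sub x x'
    have : |t'| * |x - x'| ≤ 1 * 2 := by
      gcongr
      linarith
    nlinarith [sq_nonneg w]
  have e6 : 5 * w ^ 2 + 2 * w + 2 * C * w ≤ C ^ 2 * w := by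
    nlinarith [mul_nonneg hw0.le (by nlinarith : 0 ≤ C ^ 2 - 2 * C - 7), mul_pos hw0 (sub_pos.2 hw1)]
  rw [abs_le] at e1 e2 e3 e4 e5
  rcases le_abs.1 hA with h | h
  · exact le_abs.2 (Or.inl (by linarith))
  · exact le_abs.2 (Or.inr (by linarith))

/-- Core estimate when the base configurations agree but the shifts differ. -/
lemma aux_same (C x x' y y' t' : ℝ) (j j' : ℤ) (hC : 5 ≤ C) (hj : j ≠ j')
    (hx : |x| ≤ 1) (hx' : |x'| ≤ 1) (hy : |y| ≤ 1) (hy' : |y'| ≤ 1) (ht' : |t'| ≤ 1) :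
    1 ≤ |C * ((j : ℝ) - j') + (y - y' - t' * (x - x'))| := by
  have e5 : |t' * (x - x')| ≤ 2 := by
    rw [abs_mul]
    have h := abs_sub x x'
    have : |t'| * |x - x'| ≤ 1 * 2 := by
      gcongr
      linarith
    linarith
  rw [abs_le] at e5 hy hy'
  rcases lt_or_gt_of_ne hj with h | h
  · have : (j : ℝ) + 1 ≤ j' := by exact_mod_cast h
    exact le_abs.2 (Or.inr (by nlinarith))
  · have : (j' : ℝ) + 1 ≤ j := by exact_mod_cast h
    exact le_abs.2 (Or.inl (by nlinarith))

/-- Let `C ≥ 5` and `w ∈ (0, 1/(4C²))`. Let `q 1, …, q k` be configurations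
in `[−1/2,1/2]² × [−1/2,1/2]` with `d(q i, q i') ≥ C²·w` for `i ≠ i'`. For `i` and each
integer `j` with `|j| ≤ 1/w`, let `ψ_{i,j} = ψ^(w)_{q i + (0, C·j·w²), θᵢ}`. Let `δ₀ > 0`
and let `X ⊆ Ω` satisfy `d(ω, ω') ≥ δ₀` for distinct `ω, ω' ∈ X`. Then (a) the map
`(i, j, ω) ↦ ψ_{i,j}(ω)` is injective on the relevant index set, and (b) any two distinct
elements `ω̃, ω̃'` of `X̃ = ⋃ ψ_{i,j}(X)` satisfy `d(ω̃, ω̃') ≥ w² · min(δ₀, 1)`. -/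
theorem stmt13 (C w : ℝ) (hC : 5 ≤ C) (hw0 : 0 < w) (hw : w < 1 / (4 * C ^ 2))
    (k : ℕ) (q : Fin k → ℝ × ℝ × ℝ)
    (hq : ∀ i, q i ∈
      Set.Icc (-(1 / 2) : ℝ) (1 / 2) ×ˢ Set.Icc (-(1 / 2) : ℝ) (1 / 2) ×ˢ
        Set.Icc (-(1 / 2) : ℝ) (1 / 2))
    (hqsep : ∀ i i' : Fin k, i ≠ i' → C ^ 2 * w ≤ vdist (q i) (q i'))
    (δ₀ : ℝ) (hδ₀ : 0 < δ₀)
    (X : Set (ℝ × ℝ × ℝ)) (hX : X ⊆ Omega)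
    (hXsep : ∀ ω ∈ X, ∀ ω' ∈ X, ω ≠ ω' → δ₀ ≤ vdist ω ω') :
    (∀ i i' : Fin k, ∀ j j' : ℤ, |(j : ℝ)| ≤ 1 / w → |(j' : ℝ)| ≤ 1 / w →
      ∀ ω ∈ X, ∀ ω' ∈ X,
        psimap w (q i).1 ((q i).2.1 + C * j * w ^ 2) (q i).2.2 ω =
          psimap w (q i').1 ((q i').2.1 + C * j' * w ^ 2) (q i').2.2 ω' →
        i = i' ∧ j = j' ∧ ω = ω') ∧
    (∀ z ∈ {z : ℝ × ℝ × ℝ | ∃ i : Fin k, ∃ j : ℤ, |(j : ℝ)| ≤ 1 / w ∧ ∃ ω ∈ X,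
        z = psimap w (q i).1 ((q i).2.1 + C * j * w ^ 2) (q i).2.2 ω},
      ∀ z' ∈ {z : ℝ × ℝ × ℝ | ∃ i : Fin k, ∃ j : ℤ, |(j : ℝ)| ≤ 1 / w ∧ ∃ ω ∈ X,
        z = psimap w (q i).1 ((q i).2.1 + C * j * w ^ 2) (q i).2.2 ω},
      z ≠ z' → w ^ 2 * min δ₀ 1 ≤ vdist z z') := by
  have hw1 : w < 1 := by
    refine hw.trans_le ?_
    rw [div_le_one (by positivity)]
    nlinarith
  have hm : 0 < w ^ 2 * min δ₀ 1 := mul_pos (by positivity) (lt_min hδ₀ one_pos)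
  have key : ∀ i i' : Fin k, ∀ j j' : ℤ, |(j : ℝ)| ≤ 1 / w → |(j' : ℝ)| ≤ 1 / w →
      ∀ ω ∈ X, ∀ ω' ∈ X, ¬ (i = i' ∧ j = j' ∧ ω = ω') →
      w ^ 2 * min δ₀ 1 ≤ vdist
        (psimap w (q i).1 ((q i).2.1 + C * j * w ^ 2) (q i).2.2 ω)
        (psimap w (q i').1 ((q i').2.1 + C * j' * w ^ 2) (q i').2.2 ω') := by
    intro i i' j j' hj hj' ω hω ω' hω' hne
    have hw2 : 0 < w ^ 2 := by positivity
    have hΩ := hX hω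
    have hΩ' := hX hω'
    simp only [Omega, Set.mem_prod, Set.mem_Icc, ← abs_le] at hΩ hΩ'
    obtain ⟨hx, hy, ht⟩ := hΩ
    obtain ⟨hx', hy', ht'⟩ := hΩ'
    by_cases hi : i = i'
    · subst hi
      have hE : vdist (psimap w (q i).1 ((q i).2.1 + C * j * w ^ 2) (q i).2.2 ω)
          (psimap w (q i).1 ((q i).2.1 + C * j' * w ^ 2) (q i).2.2 ω') =
          w ^ 2 * |C * ((j : ℝ) - j') + (ω.2.1 - ω'.2.1 - ω'.2.2 * (ω.1 - ω'.1))| := by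
        rw [← abs_of_pos hw2, ← abs_mul, abs_of_pos hw2]
        simp only [vdist, psimap]
        congr 1
        ring
      rw [hE]
      refine mul_le_mul_of_nonneg_left ?_ hw2.le
      by_cases hjj : j = j'
      · subst hjj
        refine (min_le_left _ _).trans ?_
        have := hXsep ω hω ω' hω' (fun h => hne ⟨rfl, rfl, h⟩)
        simpa [vdist] using this
      · exact (min_le_right _ _).trans (aux_same C _ _ _ _ _ j j' hC hjj hx hx' hy hy' ht')
    · have hs := hqsep i i' hi
      have h1 := hq i
      have h2 := hq i'
      simp only [Set.mem_prod, Set.mem_Icc] at h1 h2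
      have := aux_diff C w ((q i).2.1 - (q i').2.1 - (q i').2.2 * ((q i).1 - (q i').1)) j j'
        ω.1 ω.2.1 ω'.2.1 ω'.2.2 ω'.1 ((q i).2.2 - (q i').2.2) ((q i).1 - (q i').1)
        hC hw0 hw1 hs hj hj' hx hx' hy hy' ht'
        (abs_le.2 ⟨by linarith, by linarith⟩) (abs_le.2 ⟨by linarith, by linarith⟩)
      calc w ^ 2 * min δ₀ 1 ≤ w ^ 2 * 1 := mul_le_mul_of_nonneg_left (min_le_right _ _) hw2.le
        _ = w ^ 2 := mul_one _
        _ ≤ _ := this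
        _ = _ := by
          simp only [vdist, psimap]
          congr 1
          ring
  refine ⟨?_, ?_⟩
  · intro i i' j j' hj hj' ω hω ω' hω' h
    by_contra hne
    have := key i i' j j' hj hj' ω hω ω' hω' hne
    rw [h] at this
    simp only [vdist, sub_self, mul_zero, abs_zero] at this
    linarith
  · rintro z ⟨i, j, hj, ω, hω, rfl⟩ z' ⟨i', j', hj', ω', hω', rfl⟩ hzz
    refine key i i' j j' hj hj' ω hω ω' hω' ?_
    rintro ⟨rfl, rfl, rfl⟩
    exact hzz rfl
end

section
/- Let δ > 0 and n ∈ ℕ, and suppose there is a finite set X ⊆ Ω with |X| = n such that d(ω, ω') ≥ δ for all distinct ω, ω' ∈ X. Then there exist n points p₁, …, pₙ ∈ [0,1]² and n lines ℓ₁, …, ℓₙ in ℝ² such that pᵢ ∈ ℓᵢ for every i, and for all i ≠ j the Euclidean distance from pᵢ to ℓⱼ is at least δ/(2√2). -/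
/-- Let `δ > 0` and `n ∈ ℕ`, and suppose there is a finite set `X ⊆ Ω` with
`|X| = n` such that `d(ω, ω') ≥ δ` for all distinct `ω, ω' ∈ X`. Then there exist `n`
points `p₁, …, pₙ ∈ [0,1]²` and `n` lines `ℓ₁, …, ℓₙ` in `ℝ²` (one-dimensional affine
subspaces) such that `pᵢ ∈ ℓᵢ` for every `i`, and for all `i ≠ j` the Euclidean distance
from `pᵢ` to `ℓⱼ` is at least `δ/(2√2)`. -/
theorem stmt16 (δ : ℝ) (hδ : 0 < δ) (n : ℕ) (X : Finset (ℝ × ℝ × ℝ))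
    (hXΩ : ↑X ⊆ Omega) (hcard : X.card = n)
    (hsep : ∀ ω ∈ X, ∀ ω' ∈ X, ω ≠ ω' → δ ≤ vdist ω ω') :
    ∃ (p : Fin n → EuclideanSpace ℝ (Fin 2))
      (ℓ : Fin n → AffineSubspace ℝ (EuclideanSpace ℝ (Fin 2))),
      (∀ i, Module.finrank ℝ (ℓ i).direction = 1) ∧
      (∀ i, ∀ t, p i t ∈ Set.Icc (0 : ℝ) 1) ∧
      (∀ i, p i ∈ ℓ i) ∧
      (∀ i j, i ≠ j →
        δ / (2 * Real.sqrt 2) ≤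
          Metric.infDist (p i) (ℓ j : Set (EuclideanSpace ℝ (Fin 2)))) := by
  classical
  let e : Fin n ≃ X := (X.equivFinOfCardEq hcard).symm
  let P : ℝ × ℝ × ℝ → EuclideanSpace ℝ (Fin 2) := fun w => !₂[(w.1 + 1) / 2, (w.2.1 + 1) / 2]
  let V : ℝ × ℝ × ℝ → EuclideanSpace ℝ (Fin 2) := fun w => !₂[1, w.2.2]
  refine ⟨fun i => P (e i), fun i => AffineSubspace.mk' (P (e i)) (Submodule.span ℝ {V (e i)}),
    ?_, ?_, ?_, ?_⟩
  · intro i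
    rw [AffineSubspace.direction_mk']
    apply finrank_span_singleton
    intro h
    have := congrArg (fun v : EuclideanSpace ℝ (Fin 2) => v 0) h
    simp [V] at this
  · intro i t
    have h := hXΩ (e i).2
    simp only [Omega, Set.mem_prod, Set.mem_Icc] at h
    obtain ⟨⟨h1, h2⟩, ⟨h3, h4⟩, -⟩ := h
    fin_cases t
    · simp only [P, Set.mem_Icc]
      constructor <;> simp <;> linarith
    · simp only [P, Set.mem_Icc]
      constructor <;> simp <;> linarith
  · intro i
    exact AffineSubspace.self_mem_mk' _ _
  · intro i j hij
    have hne : (e i : ℝ × ℝ × ℝ) ≠ e j := fun h => hij (e.injective (Subtype.ext h))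
    have hd := hsep _ (e i).2 _ (e j).2 hne
    have h := hXΩ (e j).2
    simp only [Omega, Set.mem_prod, Set.mem_Icc] at h
    obtain ⟨-, -, h5, h6⟩ := h
    rw [Metric.le_infDist ⟨_, AffineSubspace.self_mem_mk' _ _⟩]
    intro q hq
    rw [SetLike.mem_coe, AffineSubspace.mem_mk', Submodule.mem_span_singleton] at hq
    obtain ⟨t, ht⟩ := hq
    have ht0 := congrArg (fun v : EuclideanSpace ℝ (Fin 2) => v 0) ht
    have ht1 := congrArg (fun v : EuclideanSpace ℝ (Fin 2) => v 1) ht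
    simp [V, P] at ht0 ht1
    rw [EuclideanSpace.dist_eq, Fin.sum_univ_two, Real.dist_eq, Real.dist_eq, sq_abs, sq_abs]
    simp only [P, vdist] at hd ⊢
    simp only [Matrix.cons_val_zero, Matrix.cons_val_one]
    generalize (e i : ℝ × ℝ × ℝ) = w at *
    generalize (e j : ℝ × ℝ × ℝ) = w' at *
    obtain ⟨x, y, s⟩ := w
    obtain ⟨x', y', s'⟩ := w'
    simp only at *
    apply Real.le_sqrt_of_sq_le
    rw [div_pow, mul_pow, Real.sq_sqrt (by norm_num), div_le_iff₀ (by norm_num)]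
    have h2 : δ ^ 2 ≤ (y - y' - s' * (x - x')) ^ 2 := by
      rw [← sq_abs (y - y' - s' * (x - x'))]
      gcongr
    set a := (x + 1) / 2 - q 0 with ha
    set b := (y + 1) / 2 - q 1 with hb
    have hk : y - y' - s' * (x - x') = 2 * (b - s' * a) := by
      rw [ha, hb]
      linear_combination 2 * s' * ht0 - 2 * ht1
    rw [hk] at h2
    have hs : s' ^ 2 ≤ 1 := by nlinarith
    nlinarith [sq_nonneg (a + s' * b), mul_nonneg (sub_nonneg.2 hs) (add_nonneg (sq_nonneg a) (sq_nonneg b))]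
end
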